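/- Assume Conditions (C) and set C = E[W³]/E[W]. Then for any sequence l = l_n with l = o(n), the weight at position l of the size-biased random order without replacement satisfies E[w_{v(l)}] = 1 + (l/ℓ_n)·(1 − C) + o((l + n^{2/3})/n) as n → ∞. -/

import Mathlib

open MeasureTheory Filter Asymptotics
open scoped Classical ENNReal Topology

noncomputable section

/-- `ℓ_n`: the total weight. -/
def ell (w : ∀ n : ℕ, Fin n → ℝ) (n : ℕ) : ℝ := ∑ i, w n i

/-- Conditions (C) on the triangular array of weights, relative to the law `μ` of the
limiting random variable `W`. -/
structure CondC (w : ∀ n : ℕ, Fin n → ℝ) (μ : Measure ℝ) : Prop where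
  isProb : IsProbabilityMeasure μ
  pos : ∀ᵐ x ∂μ, 0 < x
  w_pos : ∀ n, ∀ i : Fin n, 0 < w n i
  w_anti : ∀ n, ∀ i j : Fin n, i ≤ j → w n j ≤ w n i
  int3 : Integrable (fun x => x ^ 3) μ
  moment_eq : ∫ x, x ^ 2 ∂μ = ∫ x, x ∂μ
  weak : ∀ g : BoundedContinuousFunction ℝ ℝ,
    Tendsto (fun n : ℕ => (∑ i : Fin n, g (w n i)) / (n : ℝ)) atTop (𝓝 (∫ x, g x ∂μ))
  ell_asymp : (fun n : ℕ => ell w n - (∫ x, x ∂μ) * (n : ℝ)) =o[atTop]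
      fun n : ℕ => (n : ℝ) ^ ((2 : ℝ) / 3)
  sq_asymp : (fun n : ℕ => (∑ i : Fin n, (w n i) ^ 2) - (∫ x, x ^ 2 ∂μ) * (n : ℝ)) =o[atTop]
      fun n : ℕ => (n : ℝ) ^ ((2 : ℝ) / 3)
  cube_asymp : (fun n : ℕ => (∑ i : Fin n, (w n i) ^ 3) - (∫ x, x ^ 3 ∂μ) * (n : ℝ)) =o[atTop]
      fun _ : ℕ => (1 : ℝ)
  max_asymp : (fun n : ℕ => ⨆ i : Fin n, w n i) =o[atTop] fun n : ℕ => (n : ℝ) ^ ((1 : ℝ) / 3)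

/-- The constant `C = E[W³]/E[W]`. -/
def Cconst (μ : Measure ℝ) : ℝ := (∫ x, x ^ 3 ∂μ) / (∫ x, x ∂μ)

/-- The critical percolation parameter `p_f = (ℓ_n^{1/3} + f_n)/ℓ_n^{4/3}`. -/
def pf (w : ∀ n : ℕ, Fin n → ℝ) (f : ℕ → ℝ) (n : ℕ) : ℝ :=
  (ell w n ^ ((1 : ℝ) / 3) + f n) / ell w n ^ ((4 : ℝ) / 3)

/-- A Bernoulli-type measure on `Bool` with parameter `p`. -/
def bern (p : ℝ) : Measure Bool :=
  ENNReal.ofReal (1 - p) • Measure.dirac false + ENNReal.ofReal p • Measure.dirac true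

/-- The law of the independent edge indicators of the rank-1 inhomogeneous random graph
`G(W,p)`: the indicator attached to the (ordered) pair `(i,j)` is Bernoulli with success
probability `1 - exp (- w i * w j * p)`, all independent. -/
def graphMeasure (n : ℕ) (wn : Fin n → ℝ) (p : ℝ) : Measure (Fin n → Fin n → Bool) :=
  Measure.pi fun i => Measure.pi fun j => bern (1 - Real.exp (-(wn i * wn j * p)))

/-- The simple graph built from a sample of edge indicators: `i ~ j` iff `i ≠ j` and the
indicator of the pair `(min i j, max i j)` is `true`. -/
def graphOf {n : ℕ} (ω : Fin n → Fin n → Bool) : SimpleGraph (Fin n) :=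
  SimpleGraph.fromRel fun i j => ω (min i j) (max i j) = true

/-- The size (number of vertices) of a connected component. -/
def csize {n : ℕ} (G : SimpleGraph (Fin n)) (c : G.ConnectedComponent) : ℕ :=
  Nat.card {v : Fin n // G.connectedComponentMk v = c}

/-- The weight of a connected component: sum of the weights of its vertices. -/
def cweight {n : ℕ} (wn : Fin n → ℝ) (G : SimpleGraph (Fin n)) (c : G.ConnectedComponent) : ℝ :=
  ∑ v : Fin n, if G.connectedComponentMk v = c then wn v else 0

/-- The number of edges of a connected component. -/
def cedges {n : ℕ} (G : SimpleGraph (Fin n)) (c : G.ConnectedComponent) : ℕ :=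
  Nat.card {e : Sym2 (Fin n) // e ∈ G.edgeSet ∧ ∀ v ∈ e, G.connectedComponentMk v = c}

/-- The surplus (excess) of a connected component: edges − vertices + 1. -/
def csurplus {n : ℕ} (G : SimpleGraph (Fin n)) (c : G.ConnectedComponent) : ℤ :=
  (cedges G c : ℤ) - (csize G c : ℤ) + 1

/-- `c` is a largest connected component. -/
def isLargest {n : ℕ} (G : SimpleGraph (Fin n)) (c : G.ConnectedComponent) : Prop :=
  ∀ c', csize G c' ≤ csize G c

/-- The finset of connected components of a graph on `Fin n`. -/
def comps {n : ℕ} (G : SimpleGraph (Fin n)) : Finset G.ConnectedComponent :=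
  Finset.univ.image G.connectedComponentMk

/-- The law of the size-biased random order without replacement `(v(1),…,v(n))`, seen as a
measure on functions `Fin n → Fin n` (supported on permutations `σ`, with
`P(v = σ) = ∏_i w (σ i) / (ℓ_n − ∑_{k<i} w (σ k))`). -/
def sbMeasure (n : ℕ) (wn : Fin n → ℝ) : Measure (Fin n → Fin n) :=
  Measure.sum fun σ : Equiv.Perm (Fin n) =>
    ENNReal.ofReal (∏ i : Fin n,
        wn (σ i) / ((∑ k, wn k) - ∑ k ∈ Finset.univ.filter fun k => k < i, wn (σ k))) •
      Measure.dirac ⇑σ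

/-- The joint law of (edge indicators of `G(W,p)`, size-biased order), the two being
independent. -/
def expMeasure' (n : ℕ) (wn : Fin n → ℝ) (p : ℝ) :
    Measure ((Fin n → Fin n → Bool) × (Fin n → Fin n)) :=
  Measure.sum fun σ : Equiv.Perm (Fin n) =>
    ENNReal.ofReal (∏ i : Fin n,
        wn (σ i) / ((∑ k, wn k) - ∑ k ∈ Finset.univ.filter fun k => k < i, wn (σ k))) •
      (graphMeasure n wn p).map fun g => (g, ⇑σ)

/-- `sbW wn vord k` is `w_{v(k)}` (1-based), with the conventions `w_{v(0)} = 0` and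
`w_{v(k)} = 0` for `k > n`. -/
def sbW {n : ℕ} (wn : Fin n → ℝ) (vord : Fin n → Fin n) (k : ℕ) : ℝ :=
  if h : k - 1 < n then (if k = 0 then 0 else wn (vord ⟨k - 1, h⟩)) else 0

/-- The (0-based) first position, in the order `vord`, of a vertex of the component `c`;
this governs the order in which components are discovered by the breadth-first walk. -/
def firstIdx {n : ℕ} (G : SimpleGraph (Fin n)) (vord : Fin n → Fin n)
    (c : G.ConnectedComponent) : ℕ :=
  sInf {i : ℕ | ∃ h : i < n, G.connectedComponentMk (vord ⟨i, h⟩) = c}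

/-- The number of vertices explored strictly before the exploration of the component `c`
starts: components are explored in the order of their first appearance in `vord`, and the
exploration of `c` occupies the steps `startT c + 1, …, startT c + csize c`. -/
def startT {n : ℕ} (G : SimpleGraph (Fin n)) (vord : Fin n → Fin n)
    (c : G.ConnectedComponent) : ℕ :=
  ∑ v : Fin n, if firstIdx G vord (G.connectedComponentMk v) < firstIdx G vord c then 1 else 0

/-- The state (explored vertices, queue of discovered-but-unexplored vertices) of the
breadth-first walk after `i` steps; roots are chosen as the first undiscovered vertex in the
order `vord`, and children are queued in the order `vord`. -/
def bfwQueue {n : ℕ} (G : SimpleGraph (Fin n)) (vord : Fin n → Fin n) :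
    ℕ → Finset (Fin n) × List (Fin n)
  | 0 => (∅, [])
  | i + 1 =>
    let s := bfwQueue G vord i
    let q : List (Fin n) :=
      if s.2.isEmpty then ((List.ofFn vord).filter fun v => decide (v ∉ s.1)).take 1 else s.2
    match q with
    | [] => (s.1, [])
    | v :: rest =>
      (insert v s.1,
        rest ++ (List.ofFn vord).filter fun u => decide (G.Adj v u ∧ u ∉ s.1 ∧ u ∉ q))

/-- The reflected exploration process `L` of the breadth-first walk:
`L_0 = 1`, `L_{i+1} = max (L_i + c(i+1) - 1) 1`. -/
def Lproc {n : ℕ} (G : SimpleGraph (Fin n)) (vord : Fin n → Fin n) (i : ℕ) : ℕ :=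
  max (bfwQueue G vord i).2.length 1

/-- `discNbrs G vord i` is the number of neighbours of `v(i+1)` (0-based: `vord i`) outside
`{v(1),…,v(i+1)}`, i.e. the increment `X⁰_{i+1} + 1` of the process `L⁰`. -/
def discNbrs {n : ℕ} (G : SimpleGraph (Fin n)) (vord : Fin n → Fin n) (i : ℕ) : ℕ :=
  Nat.card {j : Fin n // (∃ h : i < n, G.Adj (vord ⟨i, h⟩) j) ∧
    ∀ k : ℕ, ∀ hk : k < n, k ≤ i → vord ⟨k, hk⟩ ≠ j}

/-- The process `L⁰`: `L⁰_0 = 1`, `L⁰_{i+1} = L⁰_i + X⁰_{i+1}` where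
`X⁰_{i+1} = ∑_{j ∉ {v(1),…,v(i+1)}} Y(v(i+1), j) − 1`. -/
def L0 {n : ℕ} (G : SimpleGraph (Fin n)) (vord : Fin n → Fin n) (m : ℕ) : ℤ :=
  1 - (m : ℤ) + ∑ i ∈ Finset.range m, (discNbrs G vord i : ℤ)

/-- The deterministic-drift process `L̃^h`, defined by
`L̃^h_m + m − 1 = ∑_{i=1}^m ∑_{k > i+h} (1 − exp (−w_{v(i)} w_{v(k)} p))`,
the inner sum being over positions `k ≤ n` in the size-biased order. -/
def Ltilde {n : ℕ} (wn : Fin n → ℝ) (p : ℝ) (vord : Fin n → Fin n) (h m : ℕ) : ℝ :=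
  1 - (m : ℝ) + ∑ i ∈ Finset.range m,
    if hi : i < n then
      ∑ k : Fin n, if i + h < (k : ℕ) then
        1 - Real.exp (-(wn (vord ⟨i, hi⟩) * wn (vord k) * p)) else 0
    else 0

/-- The law of the independent exponential clocks `(T_k)_{k ≤ n}`, `T_k` of rate `w_k / ℓ_n`. -/
def clocksMeasure (n : ℕ) (wn : Fin n → ℝ) : Measure (Fin n → ℝ) :=
  Measure.pi fun k => ProbabilityTheory.expMeasure (wn k / ∑ i, wn i)

/-- `N(x)`: the number of clocks that have rung by time `x`. -/
def Nclock {n : ℕ} (x : ℝ) (ω : Fin n → ℝ) : ℕ :=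
  ∑ k : Fin n, if ω k ≤ x then 1 else 0

/-- `X(x)`: the total weight of the clocks that have rung by time `x`. -/
def Xclock {n : ℕ} (wn : Fin n → ℝ) (x : ℝ) (ω : Fin n → ℝ) : ℝ :=
  ∑ k : Fin n, if ω k ≤ x then wn k else 0

/-- Conditions (C2) on a pair of sequences `(a, b)`, relative to the constant `Ā`. -/
structure Cond2 (w : ∀ n : ℕ, Fin n → ℝ) (Abar : ℝ) (a b : ℕ → ℝ) : Prop where
  exp_lt : ∀ᶠ n : ℕ in atTop,
    Real.exp (-(b n) ^ 2 / (Abar * (b n * (n : ℝ) ^ ((1 : ℝ) / 3) + a n))) < 1 / 4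
  a_top : Tendsto a atTop atTop
  b_top : Tendsto b atTop atTop
  a_lito : a =o[atTop] fun n : ℕ => (n : ℝ)
  b_bigO : b =O[atTop] a
  a_bigO : a =O[atTop] fun n => b n * ell w n ^ ((1 : ℝ) / 3)
  a_sq_bigO : (fun n => a n ^ 2) =O[atTop] fun n => b n * ell w n

/-- Conditions (C3) on a quadruple of sequences `(a, b, c, d)`. -/
structure Cond3 (w : ∀ n : ℕ, Fin n → ℝ) (Abar : ℝ) (a b c d : ℕ → ℝ) : Prop where
  sum_lito : (fun n => a n + c n) =o[atTop] fun n : ℕ => (n : ℝ)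
  diff_top : Tendsto (fun n => a n - b n) atTop atTop
  d_bigO : d =O[atTop] fun n => a n - b n
  c2 : Cond2 w Abar (fun n => Real.sqrt ((a n - b n) * (a n + c n))) d

/-- The list of component sizes, sorted in decreasing order. -/
def sizesList {n : ℕ} (G : SimpleGraph (Fin n)) : List ℕ :=
  (((comps G).val.map fun c => csize G c).sort (· ≤ ·)).reverse

/-- `kthSize G k` is the size of the `(k+1)`-st largest connected component of `G`
(`0` if there is no such component). -/
def kthSize {n : ℕ} (G : SimpleGraph (Fin n)) (k : ℕ) : ℕ := (sizesList G).getD k 0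

end

/-- Sum of `f` over positions `≥ i`. -/
def tailSum {n : ℕ} (f : Fin n → ℝ) (i : Fin n) : ℝ := ∑ k, if i ≤ k then f k else 0

theorem tailSum_zero {n : ℕ} (f : Fin (n+1) → ℝ) : tailSum f 0 = ∑ k, f k := by
  simp [tailSum]

theorem tailSum_succ {n : ℕ} (f : Fin (n+1) → ℝ) (i : Fin n) :
    tailSum f i.succ = tailSum (fun k => f k.succ) i := by
  simp [tailSum, Fin.sum_univ_succ, Fin.succ_le_succ_iff]

/-- probability of a permutation -/
noncomputable def permP {n : ℕ} (w : Fin n → ℝ) (σ : Equiv.Perm (Fin n)) : ℝ :=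
  ∏ i, w (σ i) / tailSum (fun k => w (σ k)) i

theorem permP_succ {n : ℕ} (w : Fin (n+1) → ℝ) (p : Fin (n+1)) (e : Equiv.Perm (Fin n)) :
    permP w (Equiv.Perm.decomposeFin.symm (p, e)) =
      w p / (∑ k, w k) * permP (fun x => w (Equiv.swap 0 p x.succ)) e := by
  rw [permP, Fin.prod_univ_succ, tailSum_zero,
    Equiv.sum_comp (Equiv.Perm.decomposeFin.symm (p, e)) w]
  simp [permP, tailSum_succ]

theorem sum_perm_succ {n : ℕ} (F : Equiv.Perm (Fin (n+1)) → ℝ) :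
    ∑ σ, F σ = ∑ p, ∑ e, F (Equiv.Perm.decomposeFin.symm (p, e)) := by
  rw [← Equiv.sum_comp Equiv.Perm.decomposeFin.symm, Fintype.sum_prod_type]

theorem permP_nonneg {n : ℕ} (w : Fin n → ℝ) (hw : ∀ i, 0 < w i) (σ : Equiv.Perm (Fin n)) :
    0 ≤ permP w σ := by
  refine Finset.prod_nonneg fun i _ => div_nonneg (hw _).le (Finset.sum_nonneg fun k _ => ?_)
  split_ifs
  · exact (hw _).le
  · exact le_rfl

theorem sum_permP : ∀ {n : ℕ} (w : Fin n → ℝ) (_ : ∀ i, 0 < w i), ∑ σ, permP w σ = 1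
  | 0, w, _ => by simp [permP]
  | n+1, w, hw => by
    rw [sum_perm_succ]
    simp_rw [permP_succ, ← Finset.mul_sum]
    have h : ∀ p, ∑ e, permP (fun x => w (Equiv.swap 0 p x.succ)) e = 1 :=
      fun p => sum_permP _ (fun i => hw _)
    simp_rw [h, mul_one, ← Finset.sum_div]
    exact div_self (Finset.sum_pos (fun i _ => hw i) Finset.univ_nonempty).ne'

theorem permP_cond : ∀ {n : ℕ} (w : Fin n → ℝ) (_ : ∀ i, 0 < w i) (g : Fin n → ℝ) (k : Fin n),
    ∑ σ, permP w σ * g (σ k) = ∑ σ, permP w σ *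
      (tailSum (fun i => w (σ i) * g (σ i)) k / tailSum (fun i => w (σ i)) k)
  | 0, _, _, _, k => k.elim0
  | n+1, w, hw, g, k => by
    refine Fin.cases ?_ (fun k => ?_) k
    · have h2 : ∀ σ : Equiv.Perm (Fin (n+1)),
          tailSum (fun i => w (σ i) * g (σ i)) 0 / tailSum (fun i => w (σ i)) 0
            = (∑ i, w i * g i) / ∑ i, w i := by
        intro σ
        rw [tailSum_zero, tailSum_zero, Equiv.sum_comp σ w,
          Equiv.sum_comp σ (fun i => w i * g i)]
      simp_rw [h2, ← Finset.sum_mul, sum_permP w hw, one_mul]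
      rw [sum_perm_succ]
      simp_rw [permP_succ]
      have h : ∀ p, ∑ e, permP (fun x => w (Equiv.swap 0 p x.succ)) e = 1 :=
        fun p => sum_permP _ (fun i => hw _)
      simp only [Equiv.Perm.decomposeFin_symm_apply_zero, ← Finset.sum_mul, ← Finset.mul_sum, h,
        Finset.sum_div]
      exact Finset.sum_congr rfl fun p _ => by ring
    · rw [sum_perm_succ, sum_perm_succ]
      refine Finset.sum_congr rfl fun p _ => ?_
      simp_rw [permP_succ, tailSum_succ, Equiv.Perm.decomposeFin_symm_apply_succ, mul_assoc,
        ← Finset.mul_sum]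
      congr 1
      exact permP_cond (fun x => w (Equiv.swap 0 p x.succ)) (fun i => hw _)
        (fun x => g (Equiv.swap 0 p x.succ)) k

theorem tailSum_eq {n : ℕ} (f : Fin n → ℝ) (i : Fin n) :
    tailSum f i = (∑ k, f k) - ∑ k ∈ Finset.univ.filter fun k => k < i, f k := by
  rw [tailSum, Finset.sum_filter, ← Finset.sum_sub_distrib]
  refine Finset.sum_congr rfl fun k _ => ?_
  by_cases h : i ≤ k
  · simp [h, not_lt.mpr h]
  · simp [h, not_le.mp h]

theorem integral_sb {n : ℕ} (w : Fin n → ℝ) (hw : ∀ i, 0 < w i) (F : (Fin n → Fin n) → ℝ) :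
    ∫ ω, F ω ∂sbMeasure n w = ∑ σ, permP w σ * F ⇑σ := by
  have hP : ∀ σ : Equiv.Perm (Fin n), (∏ i : Fin n,
        w (σ i) / ((∑ k, w k) - ∑ k ∈ Finset.univ.filter fun k => k < i, w (σ k)))
        = permP w σ := by
    intro σ
    refine Finset.prod_congr rfl fun i _ => ?_
    rw [tailSum_eq, Equiv.sum_comp σ w]
  rw [sbMeasure]
  simp_rw [hP]
  rw [Measure.sum_fintype, integral_finsetSum_measure]
  · refine Finset.sum_congr rfl fun σ _ => ?_
    rw [integral_smul_measure, integral_dirac, ENNReal.toReal_ofReal (permP_nonneg w hw σ),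
      smul_eq_mul]
  · intro σ _
    exact Integrable.smul_measure (Integrable.of_finite) ENNReal.ofReal_ne_top

theorem card_filter_head {n : ℕ} (k : Fin n) :
    (Finset.univ.filter (fun i : Fin n => i < k)).card = k := by
  have : Finset.univ.filter (fun i : Fin n => i < k) = Finset.Iio k := by ext; simp
  rw [this, Fin.card_Iio]

theorem perm_mean_bound {n : ℕ} (w : Fin n → ℝ) (hw : ∀ i, 0 < w i)
    (F G : Equiv.Perm (Fin n) → ℝ) (h : ∀ σ, |F σ| ≤ G σ) :
    |∑ σ, permP w σ * F σ| ≤ ∑ σ, permP w σ * G σ := by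
  refine (Finset.abs_sum_le_sum_abs _ _).trans (Finset.sum_le_sum fun σ _ => ?_)
  rw [abs_mul, abs_of_nonneg (permP_nonneg w hw σ)]
  exact mul_le_mul_of_nonneg_left (h σ) (permP_nonneg w hw σ)

theorem perm_mean_close {n : ℕ} (w : Fin n → ℝ) (hw : ∀ i, 0 < w i)
    (F : Equiv.Perm (Fin n) → ℝ) (c B : ℝ) (h : ∀ σ, |F σ - c| ≤ B) :
    |(∑ σ, permP w σ * F σ) - c| ≤ B := by
  have h1 := perm_mean_bound w hw (fun σ => F σ - c) (fun _ => B) h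
  simp_rw [mul_sub, Finset.sum_sub_distrib, ← Finset.sum_mul, sum_permP w hw, one_mul] at h1
  exact h1

theorem head_eq {n : ℕ} (σ : Equiv.Perm (Fin n)) (k : Fin n) :
    ∃ A : Finset (Fin n), A.card = k ∧
      ∀ f : Fin n → ℝ, ∑ i ∈ Finset.univ.filter (fun i => i < k), f (σ i) = ∑ j ∈ A, f j := by
  refine ⟨(Finset.univ.filter (fun i => i < k)).map σ.toEmbedding, ?_, fun f => ?_⟩
  · rw [Finset.card_map, card_filter_head]
  · rw [Finset.sum_map]; rfl

theorem quant_bound {n : ℕ} (w : Fin n → ℝ) (hw : ∀ i, 0 < w i) (L : Fin n)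
    (C δ N D ℓ : ℝ) (hC : 0 ≤ C) (hδ : 0 < δ) (hδ2 : δ ≤ 1/2) (hℓ : ∑ i, w i = ℓ)
    (hD : ∑ i, w i ^ 2 - ℓ = D) (hDl : |D| ≤ δ * ℓ) (hDN : |D| ≤ δ * N)
    (h3 : |∑ i, w i ^ 3 - C * ℓ| ≤ δ * ℓ) (hN : 1 + C ≤ δ * N)
    (hA : ∀ A : Finset (Fin n), A.card ≤ L →
      ∑ j ∈ A, w j ≤ δ * ℓ ∧ ∑ j ∈ A, w j ^ 2 ≤ δ * ℓ ∧ ∑ j ∈ A, w j ^ 3 ≤ δ * ℓ) :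
    |ℓ * ((∑ σ, permP w σ * w (σ L)) - 1) - ((L : ℝ) + 1) * (1 - C)|
      ≤ (20 + 20 * C) * δ * ((L : ℝ) + 1 + N) := by
  have hℓ0 : 0 < ℓ := hℓ ▸ Finset.sum_pos (fun i _ => hw i) ⟨L, Finset.mem_univ _⟩
  -- head sums
  let S : Equiv.Perm (Fin n) → Fin n → ℝ :=
    fun σ k => ∑ i ∈ Finset.univ.filter (fun i => i < k), w (σ i)
  let Q : Equiv.Perm (Fin n) → Fin n → ℝ :=
    fun σ k => ∑ i ∈ Finset.univ.filter (fun i => i < k), w (σ i) ^ 2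
  let R : Equiv.Perm (Fin n) → Fin n → ℝ :=
    fun σ k => ∑ i ∈ Finset.univ.filter (fun i => i < k), w (σ i) ^ 3
  have hS0 : ∀ σ k, 0 ≤ S σ k := fun σ k => Finset.sum_nonneg fun i _ => (hw _).le
  have hQ0 : ∀ σ k, 0 ≤ Q σ k := fun σ k => Finset.sum_nonneg fun i _ => (pow_pos (hw _) _).le
  have hR0 : ∀ σ k, 0 ≤ R σ k := fun σ k => Finset.sum_nonneg fun i _ => (pow_pos (hw _) _).le
  have hb : ∀ σ k, k ≤ L → S σ k ≤ δ * ℓ ∧ Q σ k ≤ δ * ℓ ∧ R σ k ≤ δ * ℓ := by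
    intro σ k hk
    obtain ⟨A, hc, hf⟩ := head_eq σ k
    have := hA A (by rw [hc]; exact hk)
    refine ⟨?_, ?_, ?_⟩
    · exact (hf w).trans_le this.1
    · exact (hf (fun j => w j ^ 2)).trans_le this.2.1
    · exact (hf (fun j => w j ^ 3)).trans_le this.2.2
  have hw1 : ∀ k, ∑ σ, permP w σ * w (σ k) =
      ∑ σ, permP w σ * ((D + ℓ - Q σ k) / (ℓ - S σ k)) := by
    intro k
    rw [permP_cond w hw w k]
    refine Finset.sum_congr rfl fun σ _ => ?_
    rw [tailSum_eq, tailSum_eq, Equiv.sum_comp σ w, Equiv.sum_comp σ (fun i => w i * w i), hℓ]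
    simp only [← pow_two]
    rw [← hD, sub_add_cancel]
  have hw2 : ∀ k, ∑ σ, permP w σ * w (σ k) ^ 2 =
      ∑ σ, permP w σ * ((∑ i, w i ^ 3 - R σ k) / (ℓ - S σ k)) := by
    intro k
    rw [permP_cond w hw (fun i => w i ^ 2) k]
    refine Finset.sum_congr rfl fun σ _ => ?_
    rw [tailSum_eq, tailSum_eq, Equiv.sum_comp σ w, Equiv.sum_comp σ (fun i => w i * w i ^ 2), hℓ]
    simp only [← pow_succ']
    rfl
  have hden : ∀ σ k, k ≤ L → ℓ / 2 ≤ ℓ - S σ k := by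
    intro σ k hk
    have := (hb σ k hk).1
    nlinarith
  have ha : ∀ k, k ≤ L → |(∑ σ, permP w σ * w (σ k)) - 1| ≤ 4 * δ := by
    intro k hk
    rw [hw1]
    refine perm_mean_close w hw _ _ _ fun σ => ?_
    have hd := hden σ k hk
    have hd0 : 0 < ℓ - S σ k := by linarith
    obtain ⟨b1, b2, b3⟩ := hb σ k hk
    have := hS0 σ k
    have := hQ0 σ k
    rw [div_sub_one hd0.ne', abs_div, abs_of_pos hd0, div_le_iff₀ hd0]
    have : |D + ℓ - Q σ k - (ℓ - S σ k)| ≤ 2 * δ * ℓ := by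
      rw [abs_le] at hDl ⊢; constructor <;> linarith [hDl.1, hDl.2]
    nlinarith
  have hbb : ∀ k, k ≤ L → |(∑ σ, permP w σ * w (σ k) ^ 2) - C| ≤ (4 + 2 * C) * δ := by
    intro k hk
    rw [hw2]
    refine perm_mean_close w hw _ _ _ fun σ => ?_
    have hd := hden σ k hk
    have hd0 : 0 < ℓ - S σ k := by linarith
    obtain ⟨b1, b2, b3⟩ := hb σ k hk
    have h0 := hS0 σ k
    have := hR0 σ k
    rw [div_sub' hd0.ne', abs_div, abs_of_pos hd0, div_le_iff₀ hd0]
    have e1 : 0 ≤ C * S σ k := mul_nonneg hC h0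
    have e2 : C * S σ k ≤ C * (δ * ℓ) := mul_le_mul_of_nonneg_left b1 hC
    have e3 : 0 ≤ δ * ℓ := by positivity
    have : |∑ i, w i ^ 3 - R σ k - (ℓ - S σ k) * C| ≤ (2 + C) * (δ * ℓ) := by
      rw [abs_le] at h3 ⊢; constructor <;> linarith [h3.1, h3.2]
    have e4 : (2 + C) * (2 * δ) * (ℓ / 2) ≤ (2 + C) * (2 * δ) * (ℓ - S σ k) :=
      mul_le_mul_of_nonneg_left hd (by positivity)
    linarith
  have hcard : ((Finset.univ.filter (fun i => i < L)).card : ℝ) = L := by rw [card_filter_head]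
  have hES : ∑ σ, permP w σ * S σ L =
      ∑ i ∈ Finset.univ.filter (fun i => i < L), ∑ σ, permP w σ * w (σ i) := by
    rw [Finset.sum_comm]; simp [S, Finset.mul_sum]
  have hEQ : ∑ σ, permP w σ * Q σ L =
      ∑ i ∈ Finset.univ.filter (fun i => i < L), ∑ σ, permP w σ * w (σ i) ^ 2 := by
    rw [Finset.sum_comm]; simp [Q, Finset.mul_sum]
  have hgen : ∀ (f : Fin n → ℝ) (c B : ℝ), (∀ k, k ≤ L → |f k - c| ≤ B) →
      |∑ i ∈ Finset.univ.filter (fun i => i < L), f i - L * c| ≤ L * B := by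
    intro f c B h
    rw [← hcard, ← nsmul_eq_mul, ← nsmul_eq_mul, ← Finset.sum_const, ← Finset.sum_sub_distrib]
    refine (Finset.abs_sum_le_sum_abs _ _).trans ?_
    rw [← Finset.sum_const]
    exact Finset.sum_le_sum fun i hi => h i (Finset.mem_filter.mp hi).2.le
  have hS1 := hgen _ _ _ ha
  have hQ1 := hgen _ _ _ hbb
  rw [← hES] at hS1
  rw [← hEQ] at hQ1
  set ES := ∑ σ, permP w σ * S σ L with hESd
  set EQ := ∑ σ, permP w σ * Q σ L with hEQd
  have hmain : |ℓ * ((∑ σ, permP w σ * w (σ L)) - 1) - (D + ES - EQ)|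
      ≤ 2 * δ * (|D| + ES + EQ) := by
    have hpt := perm_mean_bound w hw
      (fun σ => ℓ * ((D + ℓ - Q σ L) / (ℓ - S σ L) - 1) - (D + S σ L - Q σ L))
      (fun σ => 2 * δ * (|D| + S σ L + Q σ L)) (fun σ => by
        have hd := hden σ L le_rfl
        have hd0 : 0 < ℓ - S σ L := by linarith
        obtain ⟨b1, b2, b3⟩ := hb σ L le_rfl
        have h0 := hS0 σ L
        have h0' := hQ0 σ L
        have e : ℓ * ((D + ℓ - Q σ L) / (ℓ - S σ L) - 1) - (D + S σ L - Q σ L)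
            = (D + S σ L - Q σ L) * (S σ L / (ℓ - S σ L)) := by
          field_simp; ring
        rw [e, abs_mul, mul_comm]
        have e1 : |S σ L / (ℓ - S σ L)| ≤ 2 * δ := by
          rw [abs_of_nonneg (div_nonneg h0 hd0.le), div_le_iff₀ hd0]
          nlinarith
        have e2 : |D + S σ L - Q σ L| ≤ |D| + S σ L + Q σ L := by
          have := neg_abs_le D
          have := le_abs_self D
          rw [abs_le]; constructor <;> linarith
        exact mul_le_mul e1 e2 (abs_nonneg _) (by positivity))
    have r1 : ∑ σ, permP w σ * (ℓ * ((D + ℓ - Q σ L) / (ℓ - S σ L) - 1) - (D + S σ L - Q σ L))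
        = ℓ * ((∑ σ, permP w σ * w (σ L)) - 1) - (D + ES - EQ) := by
      rw [hw1, hESd, hEQd]
      have : ∀ σ, permP w σ * (ℓ * ((D + ℓ - Q σ L) / (ℓ - S σ L) - 1) - (D + S σ L - Q σ L))
        = ℓ * (permP w σ * ((D + ℓ - Q σ L) / (ℓ - S σ L))) - permP w σ * (ℓ + D)
          - permP w σ * S σ L + permP w σ * Q σ L := fun σ => by ring
      simp_rw [this, Finset.sum_add_distrib, Finset.sum_sub_distrib, ← Finset.mul_sum,
        ← Finset.sum_mul, sum_permP w hw]
      ring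
    have r2 : ∑ σ, permP w σ * (2 * δ * (|D| + S σ L + Q σ L)) = 2 * δ * (|D| + ES + EQ) := by
      rw [hESd, hEQd]
      have : ∀ σ, permP w σ * (2 * δ * (|D| + S σ L + Q σ L))
        = 2 * δ * (permP w σ * |D| + permP w σ * S σ L + permP w σ * Q σ L) := fun σ => by ring
      simp_rw [this, ← Finset.mul_sum, Finset.sum_add_distrib, 
        ← Finset.sum_mul, sum_permP w hw, one_mul]
    rw [r1, r2] at hpt
    exact hpt
  have hL0 : (0 : ℝ) ≤ L := Nat.cast_nonneg _
  have hN0 : 0 ≤ N := by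
    by_contra h
    nlinarith [abs_nonneg D]
  generalize (L : ℝ) = l at *
  generalize (∑ σ, permP w σ * w (σ L)) = EW at *
  clear_value ES EQ
  clear hw1 hw2 hgen ha hbb hden hb hS0 hQ0 hR0 hA h3 hES hEQ hcard
  have hESle : ES ≤ 3 * l := by
    have := (abs_le.mp hS1).2
    nlinarith
  have hEQle : EQ ≤ (2 + 2 * C) * l := by
    have := (abs_le.mp hQ1).2
    have e : l * ((4 + 2 * C) * δ) ≤ l * ((4 + 2 * C) * (1/2)) := by gcongr
    linarith
  have hDD : 2 * δ * |D| ≤ δ * N := by nlinarith [abs_nonneg D]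
  have hrhs : 2 * δ * (|D| + ES + EQ) ≤ δ * N + (10 + 4 * C) * (δ * l) := by
    have : 2 * δ * (ES + EQ) ≤ 2 * δ * (3 * l + (2 + 2 * C) * l) := by gcongr
    linarith
  have hm : |ℓ * (EW - 1) - (l + 1) * (1 - C)| ≤
      2 * δ * (|D| + ES + EQ) + |D| + l * (4 * δ) + l * ((4 + 2 * C) * δ) + (1 + C) := by
    have := neg_abs_le D
    have := le_abs_self D
    rw [abs_le] at hmain hS1 hQ1 ⊢
    constructor <;> linarith [hmain.1, hmain.2, hS1.1, hS1.2, hQ1.1, hQ1.2]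
  refine hm.trans ?_
  have p1 : 0 ≤ δ * l := by positivity
  have p2 : 0 ≤ C * (δ * l) := by positivity
  have p3 : 0 ≤ C * (δ * N) := by positivity
  have p4 : 0 ≤ (δ * N) := by positivity
  have p5 : 0 ≤ C * δ := by positivity
  linarith

/-- truncated cube -/
noncomputable def truncCube (M : ℕ) : BoundedContinuousFunction ℝ ℝ :=
  BoundedContinuousFunction.ofNormedAddCommGroup (fun x : ℝ => min (max x 0 ^ 3) (M : ℝ))
    (by fun_prop) (M : ℝ) (fun x => by
      have h : (0 : ℝ) ≤ min (max x 0 ^ 3) (M : ℝ) := le_min (by positivity) (by positivity)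
      rw [Real.norm_of_nonneg h]
      exact min_le_right _ _)

theorem truncCube_apply (M : ℕ) (x : ℝ) : truncCube M x = min (max x 0 ^ 3) (M : ℝ) := rfl

theorem truncCube_tendsto (μ : Measure ℝ) (hpos : ∀ᵐ x ∂μ, 0 < x)
    (hint : Integrable (fun x => x ^ 3) μ) :
    Tendsto (fun M : ℕ => ∫ x, truncCube M x ∂μ) atTop (𝓝 (∫ x, x ^ 3 ∂μ)) := by
  refine tendsto_integral_of_dominated_convergence (fun x => |x ^ 3|)
    (fun M => (truncCube M).continuous.aestronglyMeasurable) hint.abs (fun M => ?_) ?_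
  · filter_upwards [hpos] with x hx
    rw [truncCube_apply, max_eq_left hx.le, Real.norm_of_nonneg (le_min (by positivity) (by positivity))]
    exact (min_le_left _ _).trans (le_abs_self _)
  · filter_upwards [hpos] with x hx
    refine tendsto_const_nhds.congr' ?_
    filter_upwards [eventually_ge_atTop ⌈x ^ 3⌉₊] with M hM
    rw [truncCube_apply, max_eq_left hx.le, min_eq_left]
    exact (Nat.le_ceil _).trans (by exact_mod_cast hM)

theorem ui_bound (w : ∀ n : ℕ, Fin n → ℝ) (μ : Measure ℝ) (hC : CondC w μ) (ε : ℝ) (hε : 0 < ε) :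
    ∃ M : ℕ, ∀ᶠ n : ℕ in atTop, ∀ A : Finset (Fin n),
      ∑ j ∈ A, w n j ^ 3 ≤ M * A.card + ε * n := by
  have h := truncCube_tendsto μ hC.pos hC.int3
  obtain ⟨M, hM⟩ := (h.eventually (lt_mem_nhds
    (show (∫ x, x ^ 3 ∂μ) - ε / 3 < ∫ x, x ^ 3 ∂μ by linarith))).exists
  refine ⟨M, ?_⟩
  have h1 := (hC.weak (truncCube M)).eventually (lt_mem_nhds
    (show (∫ x, truncCube M x ∂μ) - ε / 3 < ∫ x, truncCube M x ∂μ by linarith))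
  have h2 := hC.cube_asymp.bound (show (0 : ℝ) < ε / 3 by linarith)
  filter_upwards [h1, h2, eventually_ge_atTop 1] with n h1 h2 hn A
  have hn' : (1 : ℝ) ≤ n := by exact_mod_cast hn
  have hle : ∀ j, truncCube M (w n j) ≤ w n j ^ 3 := fun j => by
    rw [truncCube_apply, max_eq_left (hC.w_pos n j).le]; exact min_le_left _ _
  have s1 : ∑ j ∈ A, w n j ^ 3 - ∑ j ∈ A, truncCube M (w n j) ≤
      ∑ j, w n j ^ 3 - ∑ j, truncCube M (w n j) := by
    rw [← Finset.sum_sub_distrib, ← Finset.sum_sub_distrib]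
    exact Finset.sum_le_sum_of_subset_of_nonneg (Finset.subset_univ _)
      fun j _ _ => sub_nonneg.mpr (hle j)
  have s2 : ∑ j ∈ A, truncCube M (w n j) ≤ M * A.card := by
    refine (Finset.sum_le_card_nsmul A _ (M : ℝ) fun j _ => ?_).trans ?_
    · rw [truncCube_apply]; exact min_le_right _ _
    · rw [nsmul_eq_mul, mul_comm]
  rw [lt_div_iff₀ (by linarith)] at h1
  rw [Real.norm_eq_abs, norm_one, mul_one] at h2
  have := (abs_le.mp h2).2
  have t1 : ((∫ x, x ^ 3 ∂μ) - ε / 3 - ε / 3) * n ≤ ((∫ x, truncCube M x ∂μ) - ε / 3) * n := by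
    gcongr
  nlinarith

theorem mean_pos (w : ∀ n : ℕ, Fin n → ℝ) (μ : Measure ℝ) (hC : CondC w μ) :
    0 < ∫ x, x ∂μ := by
  have := hC.isProb
  have hi : Integrable (fun x : ℝ => x) μ := by
    refine Integrable.mono' ((integrable_const (1 : ℝ)).add hC.int3)
      measurable_id.aestronglyMeasurable ?_
    filter_upwards [hC.pos] with x hx
    rw [Real.norm_of_nonneg hx.le]
    change x ≤ 1 + x ^ 3
    nlinarith [mul_nonneg hx.le (sq_nonneg (x - 1)), sq_nonneg (x - 1)]
  rw [integral_pos_iff_support_of_nonneg_ae (hC.pos.mono fun x hx => hx.le) hi]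
  have : Function.support (fun x : ℝ => x) =ᵐ[μ] Set.univ := by
    filter_upwards [hC.pos] with x hx
    exact eq_true (show x ∈ Function.support (fun x : ℝ => x) from hx.ne') |>.trans
      (eq_true (Set.mem_univ x)).symm
  rw [measure_congr this, measure_univ]
  exact one_pos

theorem le_one_add_cube {x : ℝ} (hx : 0 < x) : x ≤ 1 + x ^ 3 := by
  nlinarith [mul_nonneg hx.le (sq_nonneg (x - 1)), sq_nonneg (x - 1)]

theorem sq_le_one_add_cube {x : ℝ} (hx : 0 < x) : x ^ 2 ≤ 1 + x ^ 3 := by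
  nlinarith [mul_nonneg hx.le (sq_nonneg (x - 1)), sq_nonneg (x - 1)]


set_option maxHeartbeats 1000000 in
/-- Lemma of the paper: the refined estimate
`E[w_{v(l)}] = 1 + (l/ℓ_n)(1 − C) + o((l + n^{2/3})/n)` for `l = o(n)`. -/
theorem refined_mean_size_biased_weight
    (w : ∀ n : ℕ, Fin n → ℝ) (μ : Measure ℝ) (hC : CondC w μ)
    (l : ℕ → ℕ) (hl0 : ∀ n, 1 ≤ l n)
    (hl : (fun n => (l n : ℝ)) =o[atTop] fun n : ℕ => (n : ℝ)) :
    (fun n => (∫ ω, sbW (w n) ω (l n) ∂sbMeasure n (w n)) - 1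
        - ((l n : ℝ) / ell w n) * (1 - Cconst μ)) =o[atTop]
      fun n : ℕ => ((l n : ℝ) + (n : ℝ) ^ ((2 : ℝ) / 3)) / (n : ℝ) := by
  set m := ∫ x, x ∂μ with hm
  set K3 := ∫ x, x ^ 3 ∂μ with hK3
  have hm0 : 0 < m := mean_pos w μ hC
  set C := Cconst μ with hCd
  have hCm : C * m = K3 := div_mul_cancel₀ _ hm0.ne'
  have hC0 : 0 ≤ C :=
    div_nonneg (integral_nonneg_of_ae (hC.pos.mono fun x hx => (pow_pos hx 3).le)) hm0.le
  rw [isLittleO_iff]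
  intro c hc
  obtain ⟨δ, hδ, hδ2, hδc⟩ : ∃ δ : ℝ, 0 < δ ∧ δ ≤ 1 / 2 ∧ (20 + 20 * C) * δ ≤ c * (m / 2) := by
    refine ⟨min (1 / 2) (c * (m / 2) / (20 + 20 * C)), lt_min (by norm_num) (by positivity),
      min_le_left _ _, ?_⟩
    rw [mul_comm, ← le_div_iff₀ (by positivity)]
    exact min_le_right _ _
  obtain ⟨M, hM⟩ := ui_bound w μ hC (δ * m / 8) (by positivity)
  have hNt : Tendsto (fun n : ℕ => (n : ℝ) ^ ((2 : ℝ) / 3)) atTop atTop :=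
    (tendsto_rpow_atTop (by norm_num)).comp tendsto_natCast_atTop_atTop
  -- a small constant
  obtain ⟨κ, hκ, hκ1, hκ2, hκ3, hκ4⟩ : ∃ κ : ℝ, 0 < κ ∧ κ ≤ m / 2 ∧ κ ≤ δ / 2 ∧
      (2 + C) * κ ≤ δ * m / 2 ∧ 2 * κ ≤ δ * m / 2 := by
    refine ⟨min (m / 2) (min (δ / 2) (δ * m / 2 / (2 + C))), by positivity, min_le_left _ _,
      (min_le_right _ _).trans (min_le_left _ _), ?_⟩
    have h : (2 + C) * min (m / 2) (min (δ / 2) (δ * m / 2 / (2 + C))) ≤ δ * m / 2 := by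
      rw [mul_comm, ← le_div_iff₀ (by positivity)]
      exact (min_le_right _ _).trans (min_le_right _ _)
    have h' : 0 ≤ min (m / 2) (min (δ / 2) (δ * m / 2 / (2 + C))) := by positivity
    exact ⟨h, by nlinarith⟩
  have e1 := hC.ell_asymp.bound hκ
  have e2 := hC.sq_asymp.bound hκ
  have e3 := hC.cube_asymp.bound hκ
  have e4 := hl.bound (show (0 : ℝ) < min (1 / 2) (δ * m / 8 / (M + 1)) by positivity)
  rw [hC.moment_eq, ← hm] at e2
  filter_upwards [hM, e1, e2, e3, e4, hNt.eventually_ge_atTop ((1 + C) / δ),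
    eventually_ge_atTop 1] with n hM e1 e2 e3 e4 e5 hn
  have hn1 : (1 : ℝ) ≤ n := by exact_mod_cast hn
  have hNn : (n : ℝ) ^ ((2 : ℝ) / 3) ≤ n := by
    conv_rhs => rw [← Real.rpow_one (n : ℝ)]
    exact Real.rpow_le_rpow_of_exponent_le hn1 (by norm_num)
  have hN0 : 0 ≤ (n : ℝ) ^ ((2 : ℝ) / 3) := by positivity
  rw [Real.norm_of_nonneg hN0, Real.norm_eq_abs] at e1 e2
  rw [Real.norm_eq_abs, norm_one, mul_one, ← hK3] at e3
  rw [div_le_iff₀' hδ] at e5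
  have hl1 : (1 : ℝ) ≤ l n := by exact_mod_cast hl0 n
  rw [Real.norm_of_nonneg (by positivity), Real.norm_of_nonneg (by positivity)] at e4
  have hl2 : (l n : ℝ) ≤ n / 2 := by
    refine e4.trans ?_
    have := min_le_left (1 / 2 : ℝ) (δ * m / 8 / (M + 1))
    nlinarith
  have hl3 : ((M : ℝ) + 1) * l n ≤ δ * m / 8 * n := by
    have h1 : (l n : ℝ) ≤ δ * m / 8 / (M + 1) * n :=
      e4.trans (mul_le_mul_of_nonneg_right (min_le_right _ _) (by linarith))
    calc ((M : ℝ) + 1) * l n ≤ (M + 1) * (δ * m / 8 / (M + 1) * n) := by gcongr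
      _ = _ := by field_simp
  have hln : l n - 1 < n := by
    have : (l n : ℝ) < n := by linarith
    have : l n < n := by exact_mod_cast this
    omega
  have hln0 : l n ≠ 0 := by have := hl0 n; omega
  generalize hNd : (n : ℝ) ^ ((2 : ℝ) / 3) = N at *
  have hsb : ∫ ω, sbW (w n) ω (l n) ∂sbMeasure n (w n)
      = ∑ σ, permP (w n) σ * w n (σ ⟨l n - 1, hln⟩) := by
    rw [integral_sb (w n) (hC.w_pos n)]
    simp [sbW, hln, hln0]
  rw [hsb]
  have hκN : κ * N ≤ κ * n := by gcongr
  have hell : m / 2 * n ≤ ell w n := by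
    have := (abs_le.mp e1).1
    have : κ * n ≤ m / 2 * n := by gcongr
    linarith
  have hell0 : 0 < ell w n := by nlinarith
  have hδell : δ * m / 2 * n ≤ δ * ell w n := by
    calc δ * m / 2 * n = δ * (m / 2 * n) := by ring
      _ ≤ _ := by gcongr
  have hD : |∑ i, w n i ^ 2 - ell w n| ≤ 2 * (κ * N) := by
    rw [abs_le] at e1 e2 ⊢
    constructor <;> linarith [e1.1, e1.2, e2.1, e2.2]
  have hq := quant_bound (w n) (hC.w_pos n) ⟨l n - 1, hln⟩ C δ N
    (∑ i, w n i ^ 2 - ell w n) (ell w n) hC0 hδ hδ2 rfl rfl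
    (by
      have : 2 * κ * n ≤ δ * m / 2 * n := by gcongr
      linarith)
    (by
      have : κ * N ≤ δ / 2 * N := by gcongr
      linarith)
    (by
      have h1 : C * |ell w n - m * n| ≤ C * (κ * N) := by gcongr
      have h2 : C * (κ * N) ≤ C * (κ * n) := by gcongr
      have h3 : κ ≤ κ * n := by nlinarith
      have h4 : (2 + C) * κ * n ≤ δ * m / 2 * n := by gcongr
      have h5 : ∑ i, w n i ^ 3 - C * ell w n
          = (∑ i, w n i ^ 3 - K3 * n) - C * (ell w n - m * n) := by rw [← hCm]; ring
      rw [h5]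
      refine (abs_sub _ _).trans ?_
      rw [abs_mul, abs_of_nonneg hC0]
      have : 0 ≤ κ * n := by positivity
      linarith)
    e5
    (by
      intro A hA
      have hA' : (A.card : ℝ) ≤ l n := by
        have : A.card ≤ l n := hA.trans (Nat.sub_le _ _)
        exact_mod_cast this
      have h3 := hM A
      have h4 : ((M : ℝ) + 1) * A.card ≤ (M + 1) * l n := by gcongr
      have h5 : (A.card : ℝ) + ∑ j ∈ A, w n j ^ 3 ≤ δ * ell w n := by
        have : 0 ≤ δ * m / 8 * n := by positivity
        linarith
      have hc0 : (0 : ℝ) ≤ A.card := Nat.cast_nonneg _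
      have h6 : (A.card : ℝ) + ∑ j ∈ A, w n j ^ 3 = ∑ j ∈ A, (1 + w n j ^ 3) := by
        rw [Finset.sum_add_distrib]; simp
      refine ⟨?_, ?_, by linarith⟩
      · refine le_trans (Finset.sum_le_sum fun j _ => ?_) (h6 ▸ h5)
        exact le_one_add_cube (hC.w_pos n j)
      · refine le_trans (Finset.sum_le_sum fun j _ => ?_) (h6 ▸ h5)
        exact sq_le_one_add_cube (hC.w_pos n j))
  have hcast : (((⟨l n - 1, hln⟩ : Fin n) : ℕ) : ℝ) + 1 = l n := by
    rw [Fin.val_mk, Nat.cast_sub (hl0 n)]; simp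
  rw [hcast] at hq
  generalize ∑ σ, permP (w n) σ * w n (σ ⟨l n - 1, hln⟩) = EW at *
  have hid : EW - 1 - (l n : ℝ) / ell w n * (1 - C)
      = (ell w n * (EW - 1) - l n * (1 - C)) / ell w n := by field_simp
  rw [hid, Real.norm_eq_abs, abs_div, abs_of_pos hell0, Real.norm_of_nonneg (by positivity),
    div_le_iff₀ hell0]
  refine hq.trans ?_
  have hlN : 0 ≤ (l n : ℝ) + N := by linarith
  calc (20 + 20 * C) * δ * (l n + N) ≤ c * (m / 2) * (l n + N) := by gcongr
    _ = c * ((l n + N) / n) * (m / 2 * n) := by field_simp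
    _ ≤ _ := by gcongr
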